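/- Let n be a natural number, t₀ ∈ ℝ, and let C, p : ℝ → Matrix n n ℂ be matrix-valued functions differentiable at t₀ whose values C(t₀) and p(t₀) are invertible matrices. Define m(t) = C(t)⁻¹ · p(t) · C(t). Then writing C = C(t₀), p = p(t₀), γ̄ = C′·C⁻¹ and primes for derivatives at t₀: m(t₀)⁻¹·m′(t₀) + m′(t₀)·m(t₀)⁻¹ = C⁻¹ · ( p⁻¹·p′ + p′·p⁻¹ + p·γ̄·p⁻¹ − p⁻¹·γ̄·p ) · C. -/

import Mathlib

attribute [local instance] Matrix.normedAddCommGroup Matrix.normedSpace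

open Matrix

/-!
With `γ = C' C⁻¹`, differentiating `m = C⁻¹ p C` gives `m' = C⁻¹ (p' + [p, γ]) C`. Conjugation by
`C` is multiplicative and commutes with inversion, so
`m⁻¹ m' = C⁻¹ (p⁻¹ p' + γ - p⁻¹ γ p) C` and `m' m⁻¹ = C⁻¹ (p' p⁻¹ + p γ p⁻¹ - γ) C`;
the two terms `±γ` cancel in the sum.
-/

section Conjugation

open scoped Ring

variable {M : Type*} [MonoidWithZero M] {c : M}

theorem ringInverse_conj_mul_conj (hc : IsUnit c) (x y : M) :
    (c⁻¹ʳ * x * c) * (c⁻¹ʳ * y * c) = c⁻¹ʳ * (x * y) * c := by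
  simp only [mul_assoc, Ring.mul_inverse_cancel_left _ _ hc]

theorem ringInverse_conj (hc : IsUnit c) (x : M) :
    (c⁻¹ʳ * x * c)⁻¹ʳ = c⁻¹ʳ * x⁻¹ʳ * c := by
  rw [Ring.inverse_mul (.inr hc), Ring.inverse_mul (.inl hc.ringInverse),
    Ring.inverse_inverse hc, mul_assoc]

end Conjugation

section Bracket

open scoped Ring

variable {A : Type*} [Ring A] {a : A}

theorem ringInverse_mul_lie (ha : IsUnit a) (b : A) : a⁻¹ʳ * ⁅a, b⁆ = b - a⁻¹ʳ * b * a := by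
  rw [Ring.lie_def, mul_sub, Ring.inverse_mul_cancel_left _ _ ha, mul_assoc]

theorem lie_mul_ringInverse (ha : IsUnit a) (b : A) : ⁅a, b⁆ * a⁻¹ʳ = a * b * a⁻¹ʳ - b := by
  rw [Ring.lie_def, sub_mul, Ring.mul_inverse_cancel_right _ _ ha]

end Bracket

section Derivative

open scoped Ring

variable {𝕜 A : Type*} [NontriviallyNormedField 𝕜] [NormedRing A] [NormedAlgebra 𝕜 A]
  [HasSummableGeomSeries A] {C p : 𝕜 → A} {C' p' : A} {t₀ : 𝕜}

theorem hasDerivAt_fun_ringInverse (hC : HasDerivAt C C' t₀) (hCu : IsUnit (C t₀)) :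
    HasDerivAt (fun t => (C t)⁻¹ʳ) (-((C t₀)⁻¹ʳ * C' * (C t₀)⁻¹ʳ)) t₀ := by
  obtain ⟨u, hu⟩ := hCu
  have h_inv := hasFDerivAt_ringInverse (𝕜 := 𝕜) u
  rw [← Ring.inverse_unit, hu] at h_inv
  exact h_inv.comp_hasDerivAt t₀ hC

theorem hasDerivAt_ringInverse_conj (hC : HasDerivAt C C' t₀) (hp : HasDerivAt p p' t₀)
    (hCu : IsUnit (C t₀)) :
    HasDerivAt (fun t => (C t)⁻¹ʳ * p t * C t)
      ((C t₀)⁻¹ʳ * (p' + ⁅p t₀, C' * (C t₀)⁻¹ʳ⁆) * C t₀) t₀ := by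
  refine (((hasDerivAt_fun_ringInverse hC hCu).fun_mul hp).fun_mul hC).congr_deriv ?_
  simp only [Ring.lie_def, mul_add, mul_sub, add_mul, sub_mul, neg_mul, mul_assoc,
    Ring.inverse_mul_cancel _ hCu, mul_one]
  abel

theorem deriv_sum_maurer_cartan_pullbacks_general
    (hC : DifferentiableAt 𝕜 C t₀) (hp : DifferentiableAt 𝕜 p t₀)
    (hCu : IsUnit (C t₀)) (hpu : IsUnit (p t₀)) :
    ((C t₀)⁻¹ʳ * p t₀ * C t₀)⁻¹ʳ * deriv (fun t => (C t)⁻¹ʳ * p t * C t) t₀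
      + deriv (fun t => (C t)⁻¹ʳ * p t * C t) t₀ * ((C t₀)⁻¹ʳ * p t₀ * C t₀)⁻¹ʳ
      = (C t₀)⁻¹ʳ *
          ((p t₀)⁻¹ʳ * deriv p t₀ + deriv p t₀ * (p t₀)⁻¹ʳ
            + p t₀ * (deriv C t₀ * (C t₀)⁻¹ʳ) * (p t₀)⁻¹ʳ
            - (p t₀)⁻¹ʳ * (deriv C t₀ * (C t₀)⁻¹ʳ) * p t₀) * C t₀ := by
  rw [(hasDerivAt_ringInverse_conj hC.hasDerivAt hp.hasDerivAt hCu).deriv, ringInverse_conj hCu,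
    ringInverse_conj_mul_conj hCu, ringInverse_conj_mul_conj hCu, ← add_mul, ← mul_add]
  congr 2
  rw [mul_add, add_mul, ringInverse_mul_lie hpu, lie_mul_ringInverse hpu]
  abel

end Derivative

/-- If `m(t) = C(t)⁻¹ p(t) C(t)` with `C`, `p` differentiable at `t₀` and
`C(t₀)`, `p(t₀)` invertible, then at `t₀`:
`m⁻¹ m′ + m′ m⁻¹ = C⁻¹ (p⁻¹ p′ + p′ p⁻¹ + p γ̄ p⁻¹ − p⁻¹ γ̄ p) C`,
where `γ̄ = C′ C⁻¹`. -/
theorem deriv_sum_maurer_cartan_pullbacks (n : ℕ) (t₀ : ℝ)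
    (C p : ℝ → Matrix (Fin n) (Fin n) ℂ)
    (hC : DifferentiableAt ℝ C t₀) (hp : DifferentiableAt ℝ p t₀)
    (hCu : IsUnit (C t₀)) (hpu : IsUnit (p t₀)) :
    ((C t₀)⁻¹ * p t₀ * C t₀)⁻¹ * deriv (fun t => (C t)⁻¹ * p t * C t) t₀
      + deriv (fun t => (C t)⁻¹ * p t * C t) t₀ * ((C t₀)⁻¹ * p t₀ * C t₀)⁻¹
      = (C t₀)⁻¹ *
          ((p t₀)⁻¹ * deriv p t₀ + deriv p t₀ * (p t₀)⁻¹
            + p t₀ * (deriv C t₀ * (C t₀)⁻¹) * (p t₀)⁻¹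
            - (p t₀)⁻¹ * (deriv C t₀ * (C t₀)⁻¹) * p t₀) * C t₀ := by
  -- The elementwise norm is not submultiplicative, but derivatives depend only on the topology,
  -- which is definitionally that of the `L^∞` operator norm.
  let : NormedRing (Matrix (Fin n) (Fin n) ℂ) := Matrix.linftyOpNormedRing
  let : NormedAlgebra ℝ (Matrix (Fin n) (Fin n) ℂ) := Matrix.linftyOpNormedAlgebra
  have : HasSummableGeomSeries (Matrix (Fin n) (Fin n) ℂ) :=
    @instHasSummableGeomSeriesOfCompleteSpace _ _ (FiniteDimensional.complete ℝ _)
  simp only [nonsing_inv_eq_ringInverse]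
  exact deriv_sum_maurer_cartan_pullbacks_general hC hp hCu hpu
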